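/- Let I_n be the number of inversions of a uniformly random permutation of S_n. Then E(I_n) = n(n−1)/4, Var(I_n) = n(2n+5)(n−1)/72, and there exists a constant C > 0 such that for all n ≥ 2, sup over x ∈ ℝ of | P( (I_n − n(n−1)/4) / sqrt( n(2n+5)(n−1)/72 ) ≤ x ) − Φ(x) | ≤ C / sqrt(n), where Φ is the standard normal CDF. -/

import Mathlib

open Finset

/-- The number of inversions of a permutation: the number of pairs `i < j` with
`π i > π j`. -/
def inversions {n : ℕ} (π : Equiv.Perm (Fin n)) : ℕ :=
  (Finset.univ.filter (fun p : Fin n × Fin n => p.1 < p.2 ∧ π p.2 < π p.1)).card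

/-- The standard normal cumulative distribution function
`Φ(x) = ∫_{-∞}^x (1/√(2π)) e^{-t²/2} dt`. -/
noncomputable def stdNormalCDF (x : ℝ) : ℝ :=
  ∫ t in Set.Iic x, (1 / Real.sqrt (2 * Real.pi)) * Real.exp (-t ^ 2 / 2)

/-- Expectation of `F (I_n)`, defined recursively through `I_{n+1} = U + I_n` with `U` uniform on
`{0,...,n}`. -/
noncomputable def EE : ℕ → (ℕ → ℝ) → ℝ
  | 0, F => F 0
  | n + 1, F => (∑ j ∈ range (n + 1), EE n (fun m => F (j + m))) / ((n : ℝ) + 1)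

lemma EE_add (n : ℕ) (F G : ℕ → ℝ) : EE n (fun m => F m + G m) = EE n F + EE n G := by
  induction n generalizing F G with
  | zero => rfl
  | succ n ih =>
    simp only [EE]
    rw [← add_div, ← Finset.sum_add_distrib]
    congr 1
    exact Finset.sum_congr rfl fun j _ => ih _ _

lemma EE_mul (n : ℕ) (c : ℝ) (F : ℕ → ℝ) : EE n (fun m => c * F m) = c * EE n F := by
  induction n generalizing F with
  | zero => rfl
  | succ n ih =>
    simp only [EE]
    rw [← mul_div_assoc, Finset.mul_sum]
    congr 1
    exact Finset.sum_congr rfl fun j _ => ih _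

lemma EE_const (n : ℕ) (c : ℝ) : EE n (fun _ => c) = c := by
  induction n with
  | zero => rfl
  | succ n ih =>
    simp only [EE, ih]
    have : (n : ℝ) + 1 ≠ 0 := by positivity
    simp
    field_simp

lemma EE_mono (n : ℕ) (F G : ℕ → ℝ) (h : ∀ m, F m ≤ G m) : EE n F ≤ EE n G := by
  induction n generalizing F G with
  | zero => exact h 0
  | succ n ih =>
    simp only [EE]
    apply div_le_div_of_nonneg_right _ (by positivity)
    exact Finset.sum_le_sum fun j _ => ih _ _ fun m => h _

lemma EE_neg (n : ℕ) (F : ℕ → ℝ) : EE n (fun m => - F m) = - EE n F := by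
  have := EE_mul n (-1) F
  simpa using this

lemma EE_sub (n : ℕ) (F G : ℕ → ℝ) : EE n (fun m => F m - G m) = EE n F - EE n G := by
  have := EE_add n F (fun m => - G m)
  simpa [EE_neg, sub_eq_add_neg] using this

lemma EE_sum (n k : ℕ) (F : ℕ → ℕ → ℝ) :
    EE n (fun m => ∑ j ∈ range k, F j m) = ∑ j ∈ range k, EE n (F j) := by
  induction k with
  | zero => simp [EE_const]
  | succ k ih => simp only [Finset.sum_range_succ, EE_add, ih]

noncomputable def mu (n : ℕ) : ℝ := (n : ℝ) * ((n : ℝ) - 1) / 4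
noncomputable def VV (n : ℕ) : ℝ := (n : ℝ) * (2 * (n : ℝ) + 5) * ((n : ℝ) - 1) / 72

lemma abel_aux (x : ℝ) (F : ℕ → ℝ) (k : ℕ) :
    ∑ j ∈ range k, ((j : ℝ) - x / 2) * F j = (k : ℝ) * (k - 1 - x) / 2 * F k
      + ∑ j ∈ range k, (((j : ℝ) + 1) * (x - j) / 2) * (F (j + 1) - F j) := by
  induction k with
  | zero => simp
  | succ k ih =>
    rw [Finset.sum_range_succ, ih, Finset.sum_range_succ]
    push_cast
    ring

lemma csum_aux (x : ℝ) (k : ℕ) :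
    ∑ j ∈ range k, (((j : ℝ) + 1) * (x - j) / 2) = (k : ℝ) * (k + 1) * (3 * x - 2 * k + 2) / 12 := by
  induction k with
  | zero => simp
  | succ k ih =>
    rw [Finset.sum_range_succ, ih]
    push_cast
    ring

lemma EE_key (n : ℕ) (N : ℕ) (hN : n ≤ N + 1) (F U : ℕ → ℝ)
    (h : ∀ m a : ℕ, a ≤ m + N → m ≤ a + N → F (a + 1) - F a ≤ U m) :
    EE n (fun m => ((m : ℝ) - mu n) * F m) ≤ VV n * EE n U := by
  induction n generalizing F U with
  | zero => simp [EE, mu, VV]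
  | succ n ih =>
    have hn : (0 : ℝ) < (n : ℝ) + 1 := by positivity
    have e1 : EE (n + 1) (fun m => ((m : ℝ) - mu (n + 1)) * F m)
        = (∑ j ∈ range (n + 1), EE n (fun m => ((m : ℝ) - mu n) * F (j + m))) / ((n : ℝ) + 1)
          + EE n (fun m => ∑ j ∈ range (n + 1), ((j : ℝ) - n / 2) * F (j + m)) / ((n : ℝ) + 1) := by
      rw [EE_sum, ← add_div, ← Finset.sum_add_distrib]
      simp only [EE]
      congr 1
      refine Finset.sum_congr rfl fun j _ => ?_
      rw [← EE_add]
      congr 1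
      funext m
      simp only [mu]
      push_cast
      ring
    have e2 : (∑ j ∈ range (n + 1), EE n (fun m => ((m : ℝ) - mu n) * F (j + m)))
        ≤ VV n * ∑ j ∈ range (n + 1), EE n (fun m => U (j + m)) := by
      rw [Finset.mul_sum]
      refine Finset.sum_le_sum fun j _ => ?_
      refine ih (by omega) (fun m => F (j + m)) (fun m => U (j + m)) ?_
      intro m a h1 h2
      exact h (j + m) (j + a) (by omega) (by omega)
    have e3 : EE n (fun m => ∑ j ∈ range (n + 1), ((j : ℝ) - n / 2) * F (j + m))
        ≤ EE n (fun m => (n : ℝ) * (n + 2) / 12 * ∑ i ∈ range (n + 1), U (i + m)) := by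
      refine EE_mono _ _ _ fun m => ?_
      rw [abel_aux (n : ℝ) (fun j => F (j + m))]
      have hb : ∀ i ∈ range (n + 1), ∑ j ∈ range (n + 1),
          (((j : ℝ) + 1) * (n - j) / 2) * (F (j + 1 + m) - F (j + m))
          ≤ (n : ℝ) * (n + 1) * (n + 2) / 12 * U (i + m) := by
        intro i hi
        have hc := csum_aux (n : ℝ) (n + 1)
        push_cast at hc
        have : (n : ℝ) * (n + 1) * (n + 2) / 12 = ∑ j ∈ range (n + 1), (((j : ℝ) + 1) * (n - j) / 2) := by
          rw [hc]; ring
        rw [this, Finset.sum_mul]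
        refine Finset.sum_le_sum fun j hj => ?_
        rw [Finset.mem_range] at hi hj
        have hjn : (j : ℝ) ≤ n := by exact_mod_cast Nat.lt_succ_iff.mp hj
        refine mul_le_mul_of_nonneg_left ?_ ?_
        · have := h (i + m) (j + m) (by omega) (by omega)
          rwa [show j + m + 1 = j + 1 + m by ring] at this
        · have : 0 ≤ (n : ℝ) - j := by linarith
          positivity
      have hs := Finset.sum_le_sum hb
      rw [Finset.sum_const, Finset.card_range, ← Finset.mul_sum, nsmul_eq_mul] at hs
      push_cast at hs ⊢
      have hz : ((n : ℝ) + 1) * ((n : ℝ) + 1 - 1 - n) / 2 * F (n + 1 + m) = 0 := by ring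
      rw [hz, zero_add]
      refine le_of_mul_le_mul_left (hs.trans (le_of_eq ?_)) hn
      ring
    rw [EE_mul, EE_sum n (n + 1) (fun i m => U (i + m))] at e3
    rw [e1, ← add_div]
    have : VV (n + 1) * EE (n + 1) U = (VV n * ∑ j ∈ range (n + 1), EE n (fun m => U (j + m)) +
        (n : ℝ) * (n + 2) / 12 * ∑ i ∈ range (n + 1), EE n (fun m => U (i + m))) / ((n : ℝ) + 1) := by
      simp only [EE, VV]
      push_cast
      ring
    rw [this]
    exact div_le_div_of_nonneg_right (add_le_add e2 e3) hn.le

lemma EE_key' (n : ℕ) (N : ℕ) (hN : n ≤ N + 1) (F U : ℕ → ℝ)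
    (h : ∀ m a : ℕ, a ≤ m + N → m ≤ a + N → U m ≤ F (a + 1) - F a) :
    VV n * EE n U ≤ EE n (fun m => ((m : ℝ) - mu n) * F m) := by
  have := EE_key n N hN (fun m => - F m) (fun m => - U m) (by
    intro m a h1 h2
    have := h m a h1 h2
    linarith)
  simp only [mul_neg, EE_neg] at this
  linarith

lemma EE_center (n : ℕ) : EE n (fun m => (m : ℝ) - mu n) = 0 := by
  have h1 := EE_key n n (by omega) (fun _ => 1) (fun _ => 0) (by simp)
  have h2 := EE_key' n n (by omega) (fun _ => 1) (fun _ => 0) (by simp)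
  simp only [mul_one, EE_const, mul_zero] at h1 h2
  linarith

lemma EE_mean (n : ℕ) : EE n (fun m => (m : ℝ)) = mu n := by
  have := EE_center n
  rw [EE_sub, EE_const] at this
  linarith

lemma EE_var (n : ℕ) : EE n (fun m => ((m : ℝ) - mu n) * ((m : ℝ) - mu n)) = VV n := by
  have h1 := EE_key n n (by omega) (fun m => (m : ℝ)- mu n) (fun _ => 1) (by
    intro m a _ _; push_cast; linarith)
  have h2 := EE_key' n n (by omega) (fun m => (m : ℝ) - mu n) (fun _ => 1) (by
    intro m a _ _; push_cast; linarith)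
  simp only [EE_const, mul_one] at h1 h2
  linarith

lemma EE_sq (n : ℕ) : EE n (fun m => (m : ℝ) ^ 2) = VV n + mu n ^ 2 := by
  have h := EE_var n
  have e : (fun m : ℕ => ((m : ℝ) - mu n) * ((m : ℝ) - mu n))
      = fun m : ℕ => (m : ℝ) ^ 2 - (2 * mu n * (m : ℝ) - mu n ^ 2) := by
    funext m; ring
  rw [e, EE_sub, EE_sub, EE_mul, EE_const, EE_mean] at h
  linarith

/-- Insert the first value `p` in front of the permutation `e`. -/
noncomputable def consPerm {n : ℕ} (x : Fin (n + 1) × Equiv.Perm (Fin n)) :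
    Equiv.Perm (Fin (n + 1)) :=
  Equiv.ofBijective (Fin.cons x.1 (fun i => x.1.succAbove (x.2 i)) : Fin (n + 1) → Fin (n + 1))
    (Finite.injective_iff_bijective.mp (by
      rw [Fin.cons_injective_iff]
      refine ⟨?_, ?_⟩
      · rintro ⟨i, hi⟩
        exact Fin.succAbove_ne _ _ hi
      · exact Fin.succAbove_right_injective.comp x.2.injective))

lemma consPerm_zero {n : ℕ} (p : Fin (n + 1)) (e : Equiv.Perm (Fin n)) :
    consPerm (p, e) 0 = p := rfl

lemma consPerm_succ {n : ℕ} (p : Fin (n + 1)) (e : Equiv.Perm (Fin n)) (i : Fin n) :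
    consPerm (p, e) i.succ = p.succAbove (e i) := rfl

lemma consPerm_bijective (n : ℕ) : Function.Bijective (consPerm (n := n)) := by
  rw [Fintype.bijective_iff_injective_and_card]
  refine ⟨?_, ?_⟩
  · rintro ⟨p, e⟩ ⟨q, f⟩ h
    have h0 : p = q := by
      have := congrArg (fun π => π 0) h
      exact this
    subst h0
    have : e = f := by
      ext1 i
      have := congrArg (fun π => π i.succ) h
      exact Fin.succAbove_right_injective this
    rw [this]
  · simp [Fintype.card_perm, Nat.factorial_succ]

lemma inversions_eq_sum {n : ℕ} (π : Equiv.Perm (Fin n)) :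
    inversions π = ∑ i, ∑ j, if i < j ∧ π j < π i then 1 else 0 := by
  unfold inversions
  rw [Finset.card_filter, ← Finset.univ_product_univ, Finset.sum_product]

lemma inversions_cons {n : ℕ} (p : Fin (n + 1)) (e : Equiv.Perm (Fin n)) :
    inversions (consPerm (p, e)) = (p : ℕ) + inversions e := by
  rw [inversions_eq_sum, inversions_eq_sum, Fin.sum_univ_succ]
  congr 1
  · rw [Fin.sum_univ_succ]
    simp only [consPerm_zero, consPerm_succ, lt_irrefl, false_and, if_false, zero_add,
      Fin.succ_pos, true_and]
    rw [Equiv.sum_comp e (fun j => if p.succAbove j < p then 1 else 0)]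
    rw [← Finset.card_filter]
    simp only [Fin.succAbove_lt_iff_castSucc_lt]
    have : (Finset.univ.filter (fun j : Fin n => j.castSucc < p)).card
        = ((Finset.range n).filter (fun j => j < (p : ℕ))).card := by
      rw [Finset.card_filter, Finset.card_filter, Finset.sum_range]
      rfl
    rw [this]
    have : (Finset.range n).filter (fun j => j < (p : ℕ)) = Finset.range p := by
      ext j
      have := p.2
      simp only [Finset.mem_filter, Finset.mem_range]
      omega
    rw [this, Finset.card_range]
  · refine Finset.sum_congr rfl fun i _ => ?_
    rw [Fin.sum_univ_succ]
    simp [consPerm_succ]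

lemma sum_perm (n : ℕ) (F : ℕ → ℝ) :
    ∑ π : Equiv.Perm (Fin n), F (inversions π) = (Nat.factorial n : ℝ) * EE n F := by
  induction n generalizing F with
  | zero => simp [EE, inversions]
  | succ n ih =>
    rw [← (Equiv.ofBijective _ (consPerm_bijective n)).sum_comp, Fintype.sum_prod_type]
    simp only [Equiv.ofBijective_apply, inversions_cons]
    have : ∀ p : Fin (n + 1), ∑ e : Equiv.Perm (Fin n), F ((p : ℕ) + inversions e)
        = (Nat.factorial n : ℝ) * EE n (fun m => F ((p : ℕ) + m)) :=
      fun p => ih (fun m => F ((p : ℕ) + m))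
    simp only [this]
    rw [← Finset.mul_sum, ← Finset.sum_range (fun j => EE n (fun m => F (j + m)))]
    simp only [EE, Nat.factorial_succ]
    push_cast
    have : (n : ℝ) + 1 ≠ 0 := by positivity
    field_simp

/-- Standard normal density. -/
noncomputable def phi (t : ℝ) : ℝ := (1 / Real.sqrt (2 * Real.pi)) * Real.exp (-t ^ 2 / 2)

lemma phi_pos (t : ℝ) : 0 < phi t := by unfold phi; positivity

lemma phi_cont : Continuous phi := by unfold phi; fun_prop

lemma phi_neg (t : ℝ) : phi (-t) = phi t := by simp [phi]

lemma phi_integrable : MeasureTheory.Integrable phi := by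
  have h := (integrable_exp_neg_mul_sq (b := 1 / 2) (by norm_num)).const_mul
    (1 / Real.sqrt (2 * Real.pi))
  refine h.congr (Filter.Eventually.of_forall fun t => ?_)
  simp only [phi]
  congr 2
  ring

lemma phi_integral : ∫ t, phi t = 1 := by
  have h := integral_gaussian (1 / 2)
  have e : phi = fun t => (1 / Real.sqrt (2 * Real.pi)) * Real.exp (-(1 / 2) * t ^ 2) := by
    funext t
    simp only [phi]
    congr 2
    ring
  rw [e, MeasureTheory.integral_const_mul, h]
  rw [show Real.pi / (1 / 2) = 2 * Real.pi by ring]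
  have : 0 < Real.sqrt (2 * Real.pi) := by positivity
  field_simp

lemma cdf_eq (x : ℝ) : stdNormalCDF x = ∫ t in Set.Iic x, phi t := rfl

lemma cdf_add (x : ℝ) : stdNormalCDF x + ∫ t in Set.Ioi x, phi t = 1 := by
  rw [cdf_eq, intervalIntegral.integral_Iic_add_Ioi phi_integrable.integrableOn
    phi_integrable.integrableOn, phi_integral]

lemma cdf_neg (x : ℝ) : stdNormalCDF (-x) = 1 - stdNormalCDF x := by
  have h := cdf_add x
  have h2 := integral_comp_neg_Iic (-x) phi
  simp only [phi_neg, neg_neg] at h2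
  rw [cdf_eq (-x), h2]
  linarith

lemma cdf_nonneg (x : ℝ) : 0 ≤ stdNormalCDF x :=
  MeasureTheory.setIntegral_nonneg measurableSet_Iic fun t _ => (phi_pos t).le

lemma cdf_le_one (x : ℝ) : stdNormalCDF x ≤ 1 := by
  have := cdf_nonneg (-x)
  rw [cdf_neg] at this
  linarith

lemma cdf_sub (a b : ℝ) : stdNormalCDF b - stdNormalCDF a = ∫ t in a..b, phi t := by
  rw [cdf_eq, cdf_eq]
  exact intervalIntegral.integral_Iic_sub_Iic phi_integrable.integrableOn
    phi_integrable.integrableOn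

lemma cdf_mono : Monotone stdNormalCDF := by
  intro a b hab
  have := cdf_sub a b
  have h2 : 0 ≤ ∫ t in a..b, phi t :=
    intervalIntegral.integral_nonneg hab fun t _ => (phi_pos t).le
  linarith

lemma cdf_hasDerivAt (x : ℝ) : HasDerivAt stdNormalCDF (phi x) x := by
  have h : HasDerivAt (fun u => ∫ t in (0 : ℝ)..u, phi t) (phi x) x :=
    intervalIntegral.integral_hasDerivAt_right (phi_cont.intervalIntegrable _ _)
      phi_cont.aestronglyMeasurable.stronglyMeasurableAtFilter phi_cont.continuousAt
  have e : stdNormalCDF = fun u => (∫ t in (0 : ℝ)..u, phi t) + stdNormalCDF 0 := by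
    funext u
    have := cdf_sub 0 u
    linarith
  rw [e]
  exact h.add_const _

lemma phi_hasDerivAt (x : ℝ) : HasDerivAt phi (-x * phi x) x := by
  have h : HasDerivAt (fun t : ℝ => -t ^ 2 / 2) (-x) x := by
    have := ((hasDerivAt_pow 2 x).neg).div_const 2
    refine this.congr_deriv ?_
    norm_num
    ring
  have := (h.exp).const_mul (1 / Real.sqrt (2 * Real.pi))
  refine this.congr_deriv ?_
  simp only [phi]
  ring

lemma phi_tendsto : Filter.Tendsto phi Filter.atTop (nhds 0) := by
  have h : Filter.Tendsto (fun t : ℝ => -t ^ 2 / 2) Filter.atTop Filter.atBot := by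
    have h1 : Filter.Tendsto (fun t : ℝ => t ^ 2) Filter.atTop Filter.atTop :=
      Filter.tendsto_pow_atTop (by norm_num)
    exact (Filter.tendsto_neg_atTop_atBot.comp h1).atBot_div_const (by norm_num)
  have := (Real.tendsto_exp_atBot.comp h).const_mul (1 / Real.sqrt (2 * Real.pi))
  rw [mul_zero] at this
  exact this

/-- Mills ratio bound. -/
lemma mills (w : ℝ) (hw : 0 ≤ w) : w * (1 - stdNormalCDF w) ≤ phi w := by
  have hd : ∀ x : ℝ, HasDerivAt (fun t => - phi t) (x * phi x) x := by
    intro x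
    have := (phi_hasDerivAt x).neg
    refine this.congr_deriv ?_
    ring
  have hlim : Filter.Tendsto (fun t => - phi t) Filter.atTop (nhds 0) := by
    simpa using phi_tendsto.neg
  have hpos : ∀ x ∈ Set.Ioi w, 0 ≤ x * phi x := fun x hx =>
    mul_nonneg (hw.trans (le_of_lt hx)) (phi_pos x).le
  have hi := MeasureTheory.integrableOn_Ioi_deriv_of_nonneg' (fun x _ => hd x) hpos hlim
  have hI := MeasureTheory.integral_Ioi_of_hasDerivAt_of_nonneg' (fun x _ => hd x) hpos hlim
  have h1 := cdf_add w
  have h2 : 1 - stdNormalCDF w = ∫ t in Set.Ioi w, phi t := by linarith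
  rw [h2, ← MeasureTheory.integral_const_mul]
  have h3 : ∫ t in Set.Ioi w, w * phi t ≤ ∫ t in Set.Ioi w, t * phi t := by
    refine MeasureTheory.setIntegral_mono_on (phi_integrable.const_mul w).integrableOn hi
      measurableSet_Ioi fun t ht => ?_
    exact mul_le_mul_of_nonneg_right (le_of_lt ht) (phi_pos t).le
  rw [hI] at h3
  linarith

lemma tail_le (w : ℝ) (hw : 0 ≤ w) : 1 - stdNormalCDF w ≤ 6 * phi w := by
  rcases le_total 1 w with h | h
  · have h1 := mills w hw
    have h2 := cdf_le_one w
    have h3 := phi_pos w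
    nlinarith
  · have h1 := cdf_nonneg w
    have h4 : (1 : ℝ) ≤ 6 * phi w := by
      have hs : Real.sqrt (2 * Real.pi) ≤ 3 := by
        rw [Real.sqrt_le_left (by norm_num)]
        have := Real.pi_lt_d2
        linarith
      have hs0 : 0 < Real.sqrt (2 * Real.pi) := by positivity
      have he : (1 : ℝ) / 2 ≤ Real.exp (-w ^ 2 / 2) := by
        have := Real.add_one_le_exp (-w ^ 2 / 2)
        nlinarith
      have h5 : (1 : ℝ) / 3 ≤ 1 / Real.sqrt (2 * Real.pi) := one_div_le_one_div_of_le hs0 hs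
      unfold phi
      nlinarith
    linarith

/-- Left branch of the Stein solution. -/
noncomputable def stL (z w : ℝ) : ℝ := stdNormalCDF w * (1 - stdNormalCDF z) / phi w
/-- Right branch of the Stein solution. -/
noncomputable def stR (z w : ℝ) : ℝ := stdNormalCDF z * (1 - stdNormalCDF w) / phi w
/-- The Stein solution. -/
noncomputable def st (z w : ℝ) : ℝ := if w ≤ z then stL z w else stR z w
/-- Its derivative. -/
noncomputable def stD (z w : ℝ) : ℝ :=
  w * st z w + (if w ≤ z then 1 else 0) - stdNormalCDF z

lemma st_of_le {z w : ℝ} (h : w ≤ z) : st z w = stL z w := if_pos h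
lemma st_of_ge {z w : ℝ} (h : z ≤ w) : st z w = stR z w := by
  rcases h.eq_or_lt with rfl | h
  · simp [st, stL, stR]
  · exact if_neg (not_le.mpr h)

lemma stL_hasDerivAt (z w : ℝ) :
    HasDerivAt (stL z) (w * stL z w + (1 - stdNormalCDF z)) w := by
  have := ((cdf_hasDerivAt w).mul_const (1 - stdNormalCDF z)).div (phi_hasDerivAt w) (phi_pos w).ne'
  refine this.congr_deriv ?_
  have := (phi_pos w).ne'
  unfold stL
  field_simp
  ring

lemma stR_hasDerivAt (z w : ℝ) :
    HasDerivAt (stR z) (w * stR z w - stdNormalCDF z) w := by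
  have := (((cdf_hasDerivAt w).const_sub 1).const_mul (stdNormalCDF z)).div (phi_hasDerivAt w)
    (phi_pos w).ne'
  refine this.congr_deriv ?_
  have := (phi_pos w).ne'
  unfold stR
  field_simp
  ring

lemma st_nonneg (z w : ℝ) : 0 ≤ st z w := by
  have h1 := cdf_nonneg w
  have h2 := cdf_nonneg z
  have h3 : 0 ≤ 1 - stdNormalCDF w := by linarith [cdf_le_one w]
  have h4 : 0 ≤ 1 - stdNormalCDF z := by linarith [cdf_le_one z]
  have h5 := phi_pos w
  unfold st stL stR
  split_ifs <;> positivity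

lemma st_le_abs (z w : ℝ) : st z w ≤ (1 - stdNormalCDF |w|) / phi |w| := by
  have h1 := cdf_nonneg w
  have h2 := cdf_nonneg z
  have h3 : 0 ≤ 1 - stdNormalCDF w := by linarith [cdf_le_one w]
  have h4 : 0 ≤ 1 - stdNormalCDF z := by linarith [cdf_le_one z]
  have e : phi |w| = phi w := by
    rcases abs_choice w with h | h <;> rw [h]
    exact phi_neg w
  rw [e]
  rcases le_total w z with h | h
  · rw [st_of_le h]
    apply div_le_div_of_nonneg_right _ (phi_pos w).le
    have hm := cdf_mono h
    rcases le_total 0 w with h0 | h0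
    · rw [abs_of_nonneg h0]; nlinarith
    · rw [abs_of_nonpos h0, cdf_neg]; nlinarith
  · rw [st_of_ge h]
    apply div_le_div_of_nonneg_right _ (phi_pos w).le
    have hm := cdf_mono h
    rcases le_total 0 w with h0 | h0
    · rw [abs_of_nonneg h0]; nlinarith
    · rw [abs_of_nonpos h0, cdf_neg]; nlinarith

lemma st_le (z w : ℝ) : st z w ≤ 6 := by
  refine (st_le_abs z w).trans ?_
  rw [div_le_iff₀ (phi_pos _)]
  exact tail_le _ (abs_nonneg w)

lemma abs_mul_st_le (z w : ℝ) : |w * st z w| ≤ 1 := by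
  rw [abs_mul, abs_of_nonneg (st_nonneg z w)]
  refine (mul_le_mul_of_nonneg_left (st_le_abs z w) (abs_nonneg w)).trans ?_
  rw [← mul_div_assoc, div_le_iff₀ (phi_pos _), one_mul]
  exact mills _ (abs_nonneg w)

lemma stD_abs_le (z w : ℝ) : |stD z w| ≤ 2 := by
  have h := abs_le.mp (abs_mul_st_le z w)
  have h1 := cdf_nonneg z
  have h2 := cdf_le_one z
  unfold stD
  rw [abs_le]
  split_ifs <;> constructor <;> linarith [h.1, h.2]

/-- Mean value theorem left of `z`. -/
lemma st_mvt_left (z a b : ℝ) (hab : a < b) (hb : b ≤ z) :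
    ∃ c, a < c ∧ c < b ∧ st z b - st z a = (b - a) * stD z c := by
  obtain ⟨c, hc, h⟩ := exists_hasDerivAt_eq_slope (stL z)
    (fun w => w * stL z w + (1 - stdNormalCDF z)) hab
    (fun w _ => (stL_hasDerivAt z w).continuousAt.continuousWithinAt)
    (fun w _ => stL_hasDerivAt z w)
  refine ⟨c, hc.1, hc.2, ?_⟩
  have hcz : c ≤ z := hc.2.le.trans hb
  rw [st_of_le hb, st_of_le (hab.le.trans hb)]
  have : stD z c = c * stL z c + (1 - stdNormalCDF z) := by
    simp only [stD, st_of_le hcz, if_pos hcz]; ring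
  rw [this, h]
  have : b - a ≠ 0 := by linarith
  field_simp

lemma st_mvt_right (z a b : ℝ) (hab : a < b) (ha : z ≤ a) :
    ∃ c, a < c ∧ c < b ∧ st z b - st z a = (b - a) * stD z c := by
  obtain ⟨c, hc, h⟩ := exists_hasDerivAt_eq_slope (stR z)
    (fun w => w * stR z w - stdNormalCDF z) hab
    (fun w _ => (stR_hasDerivAt z w).continuousAt.continuousWithinAt)
    (fun w _ => stR_hasDerivAt z w)
  refine ⟨c, hc.1, hc.2, ?_⟩
  have hcz : z < c := ha.trans_lt hc.1
  rw [st_of_ge ha, st_of_ge (ha.trans hab.le)]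
  have : stD z c = c * stR z c - stdNormalCDF z := by
    simp only [stD, st_of_ge hcz.le, if_neg (not_le.mpr hcz)]; ring
  rw [this, h]
  have : b - a ≠ 0 := by linarith
  field_simp

lemma st_lip_aux (z a b : ℝ) (hab : a ≤ b) : |st z b - st z a| ≤ 2 * (b - a) := by
  have key : ∀ a b : ℝ, a ≤ b → (b ≤ z ∨ z ≤ a) → |st z b - st z a| ≤ 2 * (b - a) := by
    intro a b hab h
    rcases hab.eq_or_lt with rfl | hab
    · simp
    obtain ⟨c, -, -, hc⟩ : ∃ c, a < c ∧ c < b ∧ st z b - st z a = (b - a) * stD z c := by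
      rcases h with h | h
      · exact st_mvt_left z a b hab h
      · exact st_mvt_right z a b hab h
    rw [hc, abs_mul, abs_of_pos (by linarith : 0 < b - a), mul_comm]
    exact mul_le_mul_of_nonneg_right (stD_abs_le z c) (by linarith)
  rcases le_total b z with h | h
  · exact key a b hab (Or.inl h)
  rcases le_total z a with h' | h'
  · exact key a b hab (Or.inr h')
  have h1 := key a z h' (Or.inl le_rfl)
  have h2 := key z b h (Or.inr le_rfl)
  have h3 := abs_add_le (st z b - st z z) (st z z - st z a)
  rw [show st z b - st z z + (st z z - st z a) = st z b - st z a by ring] at h3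
  linarith

lemma st_lip (z a b : ℝ) : |st z b - st z a| ≤ 2 * |b - a| := by
  rcases le_total a b with h | h
  · rw [abs_of_nonneg (by linarith : 0 ≤ b - a)]; exact st_lip_aux z a b h
  · rw [abs_sub_comm, abs_sub_comm b a, abs_of_nonneg (by linarith : 0 ≤ a - b)]
    exact st_lip_aux z b a h

/-- The main smoothness estimate. -/
lemma st_diff (z δ m a b : ℝ) (hδ : 0 ≤ δ) (hab : a < b) (ha : m - δ ≤ a) (hb : b ≤ m + δ) :
    |st z b - st z a - (b - a) * stD z m|
      ≤ (b - a) * (δ * (2 * |m| + 6) + 4 * (if |m - z| ≤ δ then 1 else 0)) := by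
  have hba : 0 < b - a := by linarith
  split_ifs with h
  · have h1 := abs_le.mp (st_lip_aux z a b hab.le)
    have h2 := abs_le.mp (stD_abs_le z m)
    have h3 : 0 ≤ δ * (2 * |m| + 6) := by positivity
    rw [abs_le]
    constructor <;> nlinarith [h1.1, h1.2, h2.1, h2.2, mul_nonneg hba.le h3]
  · have hc : ∃ c, a < c ∧ c < b ∧ st z b - st z a = (b - a) * stD z c ∧ (c ≤ z ↔ m ≤ z) := by
      rw [abs_le, not_and_or, not_le, not_le] at h
      rcases h with h | h
      · obtain ⟨c, h1, h2, h3⟩ := st_mvt_left z a b hab (by linarith)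
        exact ⟨c, h1, h2, h3, iff_of_true (by linarith) (by linarith)⟩
      · obtain ⟨c, h1, h2, h3⟩ := st_mvt_right z a b hab (by linarith)
        exact ⟨c, h1, h2, h3, iff_of_false (by linarith) (by linarith)⟩
    obtain ⟨c, h1, h2, h3, h4⟩ := hc
    rw [h3, ← mul_sub, abs_mul, abs_of_pos hba]
    refine mul_le_mul_of_nonneg_left ?_ hba.le
    have e : stD z c - stD z m = m * (st z c - st z m) + (c - m) * st z c := by
      simp only [stD, h4]; ring
    have hcm : |c - m| ≤ δ := by rw [abs_le]; constructor <;> linarith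
    have h5 : |m * (st z c - st z m)| ≤ |m| * (2 * δ) := by
      rw [abs_mul]
      exact mul_le_mul_of_nonneg_left ((st_lip z m c).trans (by linarith)) (abs_nonneg m)
    have h6 : |(c - m) * st z c| ≤ δ * 6 := by
      rw [abs_mul, abs_of_nonneg (st_nonneg z c)]
      exact mul_le_mul hcm (st_le z c) (st_nonneg z c) hδ
    rw [e]
    have := abs_add_le (m * (st z c - st z m)) ((c - m) * st z c)
    linarith

lemma stein_op (n : ℕ) (σ : ℝ) (hσ : 0 < σ) (hV : VV n = σ ^ 2) (f u : ℝ → ℝ)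
    (h : ∀ w a b : ℝ, b = a + 1 / σ → w - (n + 1) / σ ≤ a → b ≤ w + (n + 1) / σ →
      f b - f a ≤ 1 / σ * u w) :
    EE n (fun m => (((m : ℝ) - mu n) / σ) * f (((m : ℝ) - mu n) / σ))
      ≤ EE n (fun m => u (((m : ℝ) - mu n) / σ)) := by
  have key := EE_key n n (by omega) (fun m => f (((m : ℝ) - mu n) / σ))
    (fun m => 1 / σ * u (((m : ℝ) - mu n) / σ)) (by
      intro m a h1 h2
      have h1' : (a : ℝ) ≤ m + n := by exact_mod_cast h1
      have h2' : (m : ℝ) ≤ a + n := by exact_mod_cast h2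
      refine h _ _ _ ?_ ?_ ?_
      · push_cast; rw [← add_div]; congr 1; ring
      · rw [← sub_div]; exact div_le_div_of_nonneg_right (by linarith) hσ.le
      · push_cast; rw [← add_div]; exact div_le_div_of_nonneg_right (by linarith) hσ.le)
  rw [EE_mul, hV] at key
  have e : (fun m : ℕ => (((m : ℝ) - mu n) / σ) * f (((m : ℝ) - mu n) / σ))
      = fun m : ℕ => 1 / σ * (((m : ℝ) - mu n) * f (((m : ℝ) - mu n) / σ)) := by
    funext m; ring
  rw [e, EE_mul]
  refine (mul_le_mul_of_nonneg_left key (by positivity)).trans (le_of_eq ?_)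
  field_simp

lemma EE_absW (n : ℕ) (σ : ℝ) (hσ : 0 < σ) (hV : VV n = σ ^ 2) :
    EE n (fun m => |((m : ℝ) - mu n) / σ|) ≤ 1 := by
  have h := EE_mono n (fun m => |((m : ℝ) - mu n) / σ|)
    (fun m => 1 / 2 + (1 / (2 * σ ^ 2)) * (((m : ℝ) - mu n) * ((m : ℝ) - mu n))) (by
      intro m
      have e : 1 / 2 + (1 / (2 * σ ^ 2)) * (((m : ℝ) - mu n) * ((m : ℝ) - mu n))
        = 1 / 2 + |((m : ℝ) - mu n) / σ| ^ 2 / 2 := by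
        rw [sq_abs]; field_simp
      simp only [e]
      nlinarith [sq_nonneg (|((m : ℝ) - mu n) / σ| - 1)])
  rw [EE_add, EE_const, EE_mul, EE_var, hV] at h
  refine h.trans (le_of_eq ?_)
  field_simp
  norm_num

open scoped Classical in
lemma EE_conc (n : ℕ) (σ : ℝ) (hσ : 0 < σ) (hV : VV n = σ ^ 2) (z : ℝ) :
    EE n (fun m => if |((m : ℝ) - mu n) / σ - z| ≤ (n + 1) / σ then 1 else 0)
      ≤ 2 * ((n + 1) / σ) := by
  set δ : ℝ := (n + 1) / σ with hδ
  have hδ0 : 0 < δ := by positivity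
  set f : ℝ → ℝ := fun x => max (-(2 * δ)) (min (2 * δ) (x - z)) with hf
  have hfa : ∀ x, |f x| ≤ 2 * δ := by
    intro x
    rw [abs_le]
    exact ⟨le_max_left _ _, max_le (by linarith) (min_le_left _ _)⟩
  have h1 := stein_op n σ hσ hV (fun x => - f x)
    (fun w => - (if |w - z| ≤ δ then 1 else 0)) (by
      intro w a b hb ha hbw
      have h0 : 0 < 1 / σ := by positivity
      rw [← hδ] at ha hbw
      split_ifs with h
      · rw [abs_le] at h
        have e : ∀ x, w - δ ≤ x → x ≤ w + δ → f x = x - z := by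
          intro x hx1 hx2
          simp only [hf]
          rw [min_eq_right (by linarith), max_eq_right (by linarith)]
        rw [e a ha (by linarith), e b (by linarith) hbw]
        linarith
      · have : f a ≤ f b := by
          simp only [hf]
          exact max_le_max le_rfl (min_le_min le_rfl (by linarith))
        linarith)
  rw [EE_neg] at h1
  have h2 := EE_mono n (fun m => -(2 * δ) * |((m : ℝ) - mu n) / σ|)
    (fun m => (((m : ℝ) - mu n) / σ) * - f (((m : ℝ) - mu n) / σ)) (by
      intro m
      have h3 := hfa (((m : ℝ) - mu n) / σ)
      have h4 := le_abs_self ((((m : ℝ) - mu n) / σ) * f (((m : ℝ) - mu n) / σ))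
      rw [abs_mul] at h4
      have h5 := mul_le_mul_of_nonneg_left h3 (abs_nonneg (((m : ℝ) - mu n) / σ))
      linarith)
  rw [EE_mul] at h2
  have h6 := EE_absW n σ hσ hV
  have h7 := mul_le_mul_of_nonneg_left h6 (by linarith : 0 ≤ 2 * δ)
  linarith

open scoped Classical in
lemma EE_berry (n : ℕ) (σ : ℝ) (hσ : 0 < σ) (hV : VV n = σ ^ 2) (z : ℝ) :
    |EE n (fun m => if ((m : ℝ) - mu n) / σ ≤ z then 1 else 0) - stdNormalCDF z|
      ≤ 16 * ((n + 1) / σ) := by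
  set δ : ℝ := (n + 1) / σ with hδ
  have hδ0 : 0 < δ := by positivity
  have h0 : 0 < 1 / σ := by positivity
  set e : ℝ → ℝ := fun w => δ * (2 * |w| + 6) + 4 * (if |w - z| ≤ δ then 1 else 0) with he
  have hd : ∀ w a b : ℝ, b = a + 1 / σ → w - δ ≤ a → b ≤ w + δ →
      |st z b - st z a - 1 / σ * stD z w| ≤ 1 / σ * e w := by
    intro w a b hb ha hbw
    have := st_diff z δ w a b hδ0.le (by linarith) ha hbw
    rwa [show b - a = 1 / σ by linarith] at this
  have hE : EE n (fun m => e (((m : ℝ) - mu n) / σ)) ≤ 16 * δ := by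
    have h1 := EE_absW n σ hσ hV
    have h2 := EE_conc n σ hσ hV z
    rw [← hδ] at h2
    have : (fun m : ℕ => e (((m : ℝ) - mu n) / σ)) = fun m : ℕ =>
        ((2 * δ) * |((m : ℝ) - mu n) / σ| + 6 * δ)
          + 4 * (if |((m : ℝ) - mu n) / σ - z| ≤ δ then 1 else 0) := by
      funext m; simp only [he]; ring
    rw [this, EE_add, EE_add, EE_mul, EE_const,
      EE_mul n 4 (fun m : ℕ => if |((m : ℝ) - mu n) / σ - z| ≤ δ then 1 else 0)]
    have h7 := mul_le_mul_of_nonneg_left h1 (by linarith : 0 ≤ 2 * δ)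
    linarith
  have u1 := stein_op n σ hσ hV (st z) (fun w => stD z w + e w) (by
    intro w a b hb ha hbw
    have := (abs_le.mp (hd w a b hb ha hbw)).2
    rw [mul_add]; linarith)
  have u2 := stein_op n σ hσ hV (fun x => - st z x) (fun w => - stD z w + e w) (by
    intro w a b hb ha hbw
    have := (abs_le.mp (hd w a b hb ha hbw)).1
    rw [mul_add]; linarith)
  simp only [mul_neg] at u2
  rw [EE_add] at u1 u2
  rw [EE_neg, EE_neg] at u2
  have u3 : EE n (fun m => stD z (((m : ℝ) - mu n) / σ))
      = EE n (fun m => (((m : ℝ) - mu n) / σ) * st z (((m : ℝ) - mu n) / σ))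
        + (EE n (fun m => if ((m : ℝ) - mu n) / σ ≤ z then 1 else 0) - stdNormalCDF z) := by
    unfold stD
    rw [EE_sub, EE_add, EE_const]
    ring
  rw [u3] at u1 u2
  rw [abs_le]
  constructor <;> linarith

open scoped Classical in
/-- The number of inversions of a uniformly random permutation has mean `n(n-1)/4`,
variance `n(2n+5)(n-1)/72`, and satisfies a Berry–Esseen bound with rate `1/√n`. -/
theorem inversions_mean_variance_berry_esseen :
    (∀ n : ℕ, 1 ≤ n →
      (∑ π : Equiv.Perm (Fin n), (inversions π : ℝ)) / (Nat.factorial n : ℝ)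
          = (n : ℝ) * ((n : ℝ) - 1) / 4 ∧
      (∑ π : Equiv.Perm (Fin n), (inversions π : ℝ) ^ 2) / (Nat.factorial n : ℝ)
          - ((n : ℝ) * ((n : ℝ) - 1) / 4) ^ 2
          = (n : ℝ) * (2 * (n : ℝ) + 5) * ((n : ℝ) - 1) / 72) ∧
    ∃ C : ℝ, 0 < C ∧ ∀ n : ℕ, 2 ≤ n → ∀ x : ℝ,
      |(((Finset.univ.filter (fun π : Equiv.Perm (Fin n) =>
              ((inversions π : ℝ) - (n : ℝ) * ((n : ℝ) - 1) / 4)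
                / Real.sqrt ((n : ℝ) * (2 * (n : ℝ) + 5) * ((n : ℝ) - 1) / 72) ≤ x)).card : ℝ)
            / (Nat.factorial n : ℝ)) - stdNormalCDF x| ≤ C / Real.sqrt n := by
  refine ⟨?_, 208, by norm_num, ?_⟩
  · intro n _
    have hf : (Nat.factorial n : ℝ) ≠ 0 := by positivity
    constructor
    · rw [sum_perm n (fun m => (m : ℝ)), EE_mean, mul_div_cancel_left₀ _ hf, mu]
    · rw [sum_perm n (fun m => (m : ℝ) ^ 2), EE_sq, mul_div_cancel_left₀ _ hf, mu, VV]
      ring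
  · intro n hn x
    have hf : (Nat.factorial n : ℝ) ≠ 0 := by positivity
    have hn' : (2 : ℝ) ≤ n := by exact_mod_cast hn
    have hVn : (n : ℝ) ^ 3 / 72 ≤ VV n := by
      unfold VV
      have h1 : 0 ≤ (n : ℝ) * ((n : ℝ) * ((n : ℝ) - 2)) :=
        mul_nonneg (by linarith) (mul_nonneg (by linarith) (by linarith))
      have h2 : 0 ≤ (n : ℝ) * ((n : ℝ) - 2) := mul_nonneg (by linarith) (by linarith)
      nlinarith
    have hVpos : 0 < VV n := lt_of_lt_of_le (by positivity) hVn
    have hσ : 0 < Real.sqrt (VV n) := Real.sqrt_pos.mpr hVpos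
    have hV : VV n = Real.sqrt (VV n) ^ 2 := (Real.sq_sqrt hVpos.le).symm
    have hb := EE_berry n _ hσ hV x
    have hc : ((Finset.univ.filter (fun π : Equiv.Perm (Fin n) =>
              ((inversions π : ℝ) - (n : ℝ) * ((n : ℝ) - 1) / 4)
                / Real.sqrt ((n : ℝ) * (2 * (n : ℝ) + 5) * ((n : ℝ) - 1) / 72) ≤ x)).card : ℝ)
            / (Nat.factorial n : ℝ)
          = EE n (fun m => if ((m : ℝ) - mu n) / Real.sqrt (VV n) ≤ x then 1 else 0) := by
      rw [div_eq_iff hf, mul_comm (EE _ _), ← sum_perm, Finset.card_filter]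
      push_cast
      rfl
    rw [hc]
    refine hb.trans ?_
    have hδ : ((n : ℝ) + 1) / Real.sqrt (VV n) ≤ 13 / Real.sqrt n := by
      have hs : 0 < Real.sqrt (n : ℝ) := Real.sqrt_pos.mpr (by linarith)
      rw [div_le_div_iff₀ hσ hs]
      refine abs_le_of_sq_le_sq' ?_ (by positivity) |>.2
      rw [mul_pow, mul_pow, Real.sq_sqrt hVpos.le, Real.sq_sqrt (by linarith)]
      have h3 : ((n : ℝ) + 1) ^ 2 ≤ 9 / 4 * (n : ℝ) ^ 2 := by nlinarith
      have h4 := mul_le_mul_of_nonneg_right h3 (by linarith : (0 : ℝ) ≤ n)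
      nlinarith [pow_pos (by linarith : (0 : ℝ) < n) 3]
    calc 16 * (((n : ℝ) + 1) / Real.sqrt (VV n)) ≤ 16 * (13 / Real.sqrt n) := by linarith
      _ = 208 / Real.sqrt n := by ring
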